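/- arXiv:1503.05704 — 2 statements merged into one kernel-verified Lean document; each statement's English description precedes it below -/
import Mathlib

section
/- The covering radius of the Z_4-Simplex code S_2(4) equals 3. (Here S_2(4) has length 5, since V_2 has 5 elements when q = 4.) -/
/-- The Hamming distance between two words: the number of coordinates where they differ. -/
noncomputable def hdist {q : ℕ} {I : Type*} (x y : I → ZMod q) : ℕ :=
  Set.ncard {i | x i ≠ y i}

/-- The covering radius of a code `C`: the maximum over all words `u` of the minimum Hamming
distance from `u` to a codeword of `C`. -/
noncomputable def covRad {q : ℕ} {I : Type*} (C : Set (I → ZMod q)) : ℕ :=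
  sSup {r | ∃ u : I → ZMod q, r = sInf {e | ∃ c ∈ C, e = hdist u c}}

/-- `Vset q k` consists of the nonzero words `v : Fin k → ZMod q` whose last nonzero
coordinate equals `1` (one representative from each free rank-one submodule). -/
def Vset (q k : ℕ) : Set (Fin k → ZMod q) :=
  {v | v ≠ 0 ∧ ∃ m : Fin k, v m ≠ 0 ∧ (∀ i, m < i → v i = 0) ∧ v m = 1}

/-- The `ZMod q`-Simplex code of dimension `k`: the words obtained by evaluating a linear
form `u` at all columns `v ∈ Vset q k`. -/
def SimplexCode (q k : ℕ) : Set (↥(Vset q k) → ZMod q) :=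
  {c | ∃ u : Fin k → ZMod q, c = fun v : ↥(Vset q k) => ∑ i, u i * v.1 i}

/-!
A linear form in two variables can be prescribed at the two unit vectors, so every word agrees with
a codeword of `S₂(q)` in two of the `q + 1` columns; hence the covering radius is at most `q - 1`.

The columns of `S₂(q)` are `(1, 0)` and `(x, 1)`, and the codeword of `(a, b)` takes the values `a`
and `a x + b` there. Let a word take the values `0` at `(1, 0)` and `σ x` at `(x, 1)`, with `σ` a
permutation. It agrees with a codeword of slope `a = 0` in exactly two columns, so if `σ` also
agrees with every affine function of nonzero slope at most twice, the word has distance at least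
`q - 1` from the code.

For `q = 4` take `σ` to be the transposition of `2` and `3`. Three points of `ZMod 4` are always
consecutive, and on `x, x + 1, x + 2` an affine `σ` would satisfy `σ x + σ (x + 2) = 2 σ (x + 1)`,
whereas `σ x + σ (x + 2) = 3` is odd for every `x`.
-/

section CoveringRadius

variable {q r : ℕ} {I : Type*} {C : Set (I → ZMod q)}

theorem hdist_eq_sum [Fintype I] (x y : I → ZMod q) :
    hdist x y = ∑ i, if x i = y i then 0 else 1 := by
  simp [hdist, Set.ncard_eq_toFinset_card', Finset.sum_ite]

theorem hdist_add_ncard_setOf_eq [Finite I] (x y : I → ZMod q) :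
    hdist x y + {i | x i = y i}.ncard = Nat.card I := by
  rw [add_comm]
  exact Set.ncard_add_ncard_compl {i | x i = y i}

theorem sInf_hdist_le {c : I → ZMod q} (hc : c ∈ C) (u : I → ZMod q) :
    sInf {e | ∃ c ∈ C, e = hdist u c} ≤ hdist u c :=
  Nat.sInf_le ⟨c, hc, rfl⟩

theorem covRad_le (h : ∀ u, ∃ c ∈ C, hdist u c ≤ r) : covRad C ≤ r := by
  refine csSup_le' ?_
  rintro _ ⟨u, rfl⟩
  obtain ⟨c, hc, hr⟩ := h u
  exact (sInf_hdist_le hc u).trans hr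

theorem le_covRad [Finite I] (hC : C.Nonempty) (u : I → ZMod q) (h : ∀ c ∈ C, r ≤ hdist u c) :
    r ≤ covRad C := by
  obtain ⟨c₀, hc₀⟩ := hC
  have bddAbove : BddAbove {r | ∃ u, r = sInf {e | ∃ c ∈ C, e = hdist u c}} := by
    refine ⟨Nat.card I, ?_⟩
    rintro _ ⟨w, rfl⟩
    exact (sInf_hdist_le hc₀ w).trans (Set.ncard_le_card _)
  refine le_csSup_of_le bddAbove ⟨u, rfl⟩ (le_csInf ⟨_, c₀, hc₀, rfl⟩ ?_)
  rintro _ ⟨c, hc, rfl⟩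
  exact h c hc

theorem covRad_le_card_sub_ncard [Finite I] (s : Set I) (h : ∀ u, ∃ c ∈ C, Set.EqOn u c s) :
    covRad C ≤ Nat.card I - s.ncard := by
  refine covRad_le fun u ↦ ?_
  obtain ⟨c, hc, hu⟩ := h u
  have agree : s.ncard ≤ {i | u i = c i}.ncard := Set.ncard_le_ncard hu
  have total := hdist_add_ncard_setOf_eq u c
  exact ⟨c, hc, by omega⟩

end CoveringRadius

section Simplex

variable {q k : ℕ} [Nontrivial (ZMod q)]

theorem single_one_mem_vset (i : Fin k) : Pi.single i 1 ∈ Vset q k :=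
  ⟨by simp, i, by simp, fun _ hj ↦ Pi.single_eq_of_ne hj.ne' 1, by simp⟩

theorem covRad_simplexCode_le [NeZero q] :
    covRad (SimplexCode q k) ≤ (Vset q k).ncard - k := by
  let unitColumn (i : Fin k) : Vset q k := ⟨Pi.single i 1, single_one_mem_vset i⟩
  have unitColumn_injective : Function.Injective unitColumn := fun i j h ↦
    (Pi.basisFun (ZMod q) (Fin k)).injective (by simpa [unitColumn] using h)
  have ncard_range : (Set.range unitColumn).ncard = k := by
    rw [← Set.image_univ, Set.ncard_image_of_injective _ unitColumn_injective, Set.ncard_univ,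
      Nat.card_fin]
  have bound := covRad_le_card_sub_ncard (C := SimplexCode q k) (Set.range unitColumn) fun u ↦ by
    refine ⟨_, ⟨u ∘ unitColumn, rfl⟩, ?_⟩
    rintro _ ⟨i, rfl⟩
    simp [unitColumn, Pi.single_apply]
  rwa [ncard_range, Nat.card_coe_set_eq] at bound

end Simplex

section ProjectiveLine

variable {q : ℕ}

theorem mem_vset_two_iff [Nontrivial (ZMod q)] {v : Fin 2 → ZMod q} :
    v ∈ Vset q 2 ↔ v 1 = 1 ∨ v 0 = 1 ∧ v 1 = 0 := by
  constructor
  · rintro ⟨-, m, -, later, hm⟩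
    fin_cases m
    · exact .inr ⟨hm, later 1 Fin.zero_lt_one⟩
    · exact .inl hm
  · rintro (h | ⟨h₀, h₁⟩)
    · exact ⟨fun hv ↦ by simp [hv] at h, 1, by simp [h], fun i hi ↦ by omega, h⟩
    · refine ⟨fun hv ↦ by simp [hv] at h₀, 0, by simp [h₀], fun i hi ↦ ?_, h₀⟩
      obtain rfl : i = 1 := by omega
      exact h₁

/-- The columns of `S₂(q)` as the affine line `ZMod q` with a point at infinity: `some x` is the
column `(x, 1)` and `none` is the column `(1, 0)`. -/
def columnEquiv (q : ℕ) [Nontrivial (ZMod q)] : Option (ZMod q) ≃ Vset q 2 where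
  toFun
    | none => ⟨![1, 0], mem_vset_two_iff.2 (.inr ⟨rfl, rfl⟩)⟩
    | some x => ⟨![x, 1], mem_vset_two_iff.2 (.inl rfl)⟩
  invFun v := if v.1 1 = 0 then none else some (v.1 0)
  left_inv p := by cases p <;> simp
  right_inv := by
    rintro ⟨v, hv⟩
    ext i
    rcases mem_vset_two_iff.1 hv with h | ⟨h₀, h₁⟩ <;> fin_cases i <;> simp [*]

variable [Nontrivial (ZMod q)]

theorem ncard_vset_two [NeZero q] : (Vset q 2).ncard = q + 1 := by
  rw [← Nat.card_coe_set_eq, ← Nat.card_congr (columnEquiv q), Finite.card_option, Nat.card_zmod]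

theorem covRad_simplexCode_two_le [NeZero q] : covRad (SimplexCode q 2) ≤ q - 1 := by
  have bound := covRad_simplexCode_le (q := q) (k := 2)
  rwa [ncard_vset_two] at bound

/-- The word on the columns of `S₂(q)` with value `t` at `(1, 0)` and `f x` at `(x, 1)`. -/
def lineWord (t : ZMod q) (f : ZMod q → ZMod q) : Vset q 2 → ZMod q :=
  fun v ↦ ((columnEquiv q).symm v).elim t f

theorem mem_simplexCode_two_iff {c : Vset q 2 → ZMod q} :
    c ∈ SimplexCode q 2 ↔ ∃ a b, c = lineWord a fun x ↦ a * x + b := by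
  have eval (u : Fin 2 → ZMod q) :
      (fun v : Vset q 2 ↦ ∑ i, u i * v.1 i) = lineWord (u 0) fun x ↦ u 0 * x + u 1 := by
    ext v
    obtain ⟨p, rfl⟩ := (columnEquiv q).surjective v
    cases p <;> simp [lineWord, columnEquiv]
  constructor
  · rintro ⟨u, rfl⟩
    exact ⟨u 0, u 1, eval u⟩
  · rintro ⟨a, b, rfl⟩
    exact ⟨![a, b], (eval ![a, b]).symm⟩

theorem hdist_lineWord [NeZero q] (s t : ZMod q) (f g : ZMod q → ZMod q) :
    hdist (lineWord s f) (lineWord t g) = (if s = t then 0 else 1) + hdist f g := by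
  have : Fintype (Vset q 2) := .ofEquiv _ (columnEquiv q)
  rw [hdist_eq_sum, hdist_eq_sum, ← (columnEquiv q).sum_comp, Fintype.sum_option]
  simp [lineWord]

theorem le_hdist_lineWord_perm [NeZero q] (σ : Equiv.Perm (ZMod q))
    (hσ : ∀ a ≠ 0, ∀ b, {x | σ x = a * x + b}.ncard ≤ 2) (a b : ZMod q) :
    q - 1 ≤ hdist (lineWord 0 σ) (lineWord a fun x ↦ a * x + b) := by
  have total := hdist_add_ncard_setOf_eq σ fun x ↦ a * x + b
  rw [Nat.card_zmod] at total
  rw [hdist_lineWord]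
  obtain rfl | ha := eq_or_ne a 0
  · have agree_once : {x | σ x = 0 * x + b} = {σ.symm b} := by
      ext x
      simp [Equiv.eq_symm_apply]
    rw [agree_once, Set.ncard_singleton] at total
    omega
  · have agree := hσ a ha b
    rw [if_neg ha.symm]
    omega

theorem covRad_simplexCode_two_eq [NeZero q] (σ : Equiv.Perm (ZMod q))
    (hσ : ∀ a ≠ 0, ∀ b, {x | σ x = a * x + b}.ncard ≤ 2) :
    covRad (SimplexCode q 2) = q - 1 := by
  refine covRad_simplexCode_two_le.antisymm (le_covRad ⟨_, 0, rfl⟩ (lineWord 0 σ) fun c hc ↦ ?_)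
  obtain ⟨a, b, rfl⟩ := mem_simplexCode_two_iff.1 hc
  exact le_hdist_lineWord_perm σ hσ a b

end ProjectiveLine

section ZModFour

theorem exists_consecutive_mem_of_two_lt_card {s : Finset (ZMod 4)} (hs : 2 < s.card) :
    ∃ x, x ∈ s ∧ x + 1 ∈ s ∧ x + 2 ∈ s := by
  decide +revert

theorem ncard_setOf_eq_affine_le_two {f : ZMod 4 → ZMod 4}
    (hf : ∀ x, f x + f (x + 2) ≠ 2 * f (x + 1)) (a b : ZMod 4) :
    {x | f x = a * x + b}.ncard ≤ 2 := by
  by_contra! three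
  rw [Set.ncard_eq_toFinset_card'] at three
  obtain ⟨x, h₀, h₁, h₂⟩ := exists_consecutive_mem_of_two_lt_card three
  simp only [Set.mem_toFinset, Set.mem_ofPred_eq] at h₀ h₁ h₂
  apply hf x
  rw [h₀, h₁, h₂]
  ring

theorem swap_two_three_add_ne (x : ZMod 4) :
    Equiv.swap 2 3 x + Equiv.swap 2 3 (x + 2) ≠ 2 * Equiv.swap 2 3 (x + 1) := by
  decide +revert

end ZModFour

/-- The covering radius of the `ZMod 4`-Simplex code `S₂(4)` equals `3`; its length, the
number of columns, is `5`. -/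
theorem covRad_simplex_two_four : covRad (SimplexCode 4 2) = 3 ∧ (Vset 4 2).ncard = 5 := by
  have : Nontrivial (ZMod 4) := ZMod.nontrivial_iff.2 (by decide)
  have swap_agrees_le_two (a b : ZMod 4) : {x | Equiv.swap 2 3 x = a * x + b}.ncard ≤ 2 :=
    ncard_setOf_eq_affine_le_two swap_two_three_add_ne a b
  exact ⟨covRad_simplexCode_two_eq (Equiv.swap 2 3) fun a _ ↦ swap_agrees_le_two a, ncard_vset_two⟩
end

section
/- Let q ≥ 2 be an even integer and let k ≥ u ≥ 2 with k ≥ 2. Then, as an inequality of real numbers, R(M_{k+1,u}) ≤ ((k-u)·(q-1)·φ(q) + (q² - q - φ(q))·q^{u+1}·(q^{k-u} - 1))/(q·(q-1)²) + (q-1)·φ(q)·n_u/q + (q-1-φ(q))·n_u + 1, where n_u = (q^u - 1)/(q - 1). -/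
/-- `Wset q k u` is the set of columns of the `ZMod q`-MacDonald code `M_{k,u}`: the columns
`v ∈ Vset q k` having a nonzero coordinate at some index `i < k - u`. -/
def Wset (q k u : ℕ) : Set (Fin k → ZMod q) :=
  {v | v ∈ Vset q k ∧ ∃ i : Fin k, (i : ℕ) < k - u ∧ v i ≠ 0}

/-- The `ZMod q`-MacDonald code `M_{k,u}`: the words obtained by evaluating a linear form
`x` at all columns `v ∈ Wset q k u`. -/
def MacDonaldCode (q k u : ℕ) : Set (↥(Wset q k u) → ZMod q) :=
  {c | ∃ x : Fin k → ZMod q, c = fun v : ↥(Wset q k u) => ∑ i, x i * v.1 i}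

/-!
For a uniformly random `x`, each coordinate of the codeword generated by `x` is uniform on
`ZMod q`, because every column has an entry equal to `1`. It therefore disagrees with a given word
with probability `(q - 1) / q`, so some codeword is at distance at most `(q - 1) |W| / q` from that
word. Replacing the last nonzero entry of a column by an arbitrary nonzero scalar enumerates the
vectors with a nonzero coordinate of index `< k - u` exactly once, so `(q - 1) |W| = q ^ k - q ^ u`.
Hence `R(M_{k+1,u}) ≤ q ^ k - q ^ u / q`, which is at most the stated bound since `φ(q) ≤ q - 1`.
-/

open Finset Function

section Averaging

variable {G H I : Type*} [AddGroup G] [AddMonoid H] [Fintype H] [DecidableEq H]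

lemma card_fiber_mul_card_of_surjective [Fintype G] (f : G →+ H) (hf : Surjective f) (b : H) :
    #{g | f g = b} * Fintype.card H = Fintype.card G := by
  have fiber_card (c : H) : #{g | f g = c} = #{g | f g = b} :=
    AddMonoidHom.card_fiber_eq_of_mem_range f (hf c) (hf b)
  have partition : Fintype.card G = ∑ c : H, #{g | f g = c} :=
    card_eq_sum_card_fiberwise fun _ _ => mem_coe.2 (mem_univ _)
  rw [partition, sum_congr rfl fun c _ => fiber_card c, sum_const, smul_eq_mul, card_univ,
    mul_comm]

lemma card_filter_ne_mul_card_of_surjective [Fintype G] (f : G →+ H) (hf : Surjective f)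
    (b : H) :
    #{g | b ≠ f g} * Fintype.card H = Fintype.card G * (Fintype.card H - 1) := by
  have split : #{g | f g = b} + #{g | b ≠ f g} = Fintype.card G := by
    simpa only [eq_comm (b := b), card_univ] using
      card_filter_add_card_filter_not (s := univ) fun g => f g = b
  have fiber := card_fiber_mul_card_of_surjective f hf b
  rw [Nat.mul_sub_one, ← split, add_mul, split, fiber, Nat.add_sub_cancel_left]

variable [Fintype I]

lemma sum_hammingDist_mul_card [Fintype G] (f : G →+ (I → H))
    (hf : ∀ i, Surjective fun g => f g i) (w : I → H) :
    (∑ g, hammingDist w (f g)) * Fintype.card H =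
      Fintype.card G * (Fintype.card I * (Fintype.card H - 1)) := by
  calc (∑ g, hammingDist w (f g)) * Fintype.card H
      = (∑ i, #{g | w i ≠ f g i}) * Fintype.card H := by
        simp only [hammingDist, card_filter]
        rw [sum_comm]
    _ = ∑ _i : I, Fintype.card G * (Fintype.card H - 1) := by
        rw [sum_mul]
        exact sum_congr rfl fun i _ =>
          card_filter_ne_mul_card_of_surjective ((Pi.evalAddMonoidHom (fun _ => H) i).comp f)
            (hf i) (w i)
    _ = Fintype.card G * (Fintype.card I * (Fintype.card H - 1)) := by
        rw [sum_const, card_univ, smul_eq_mul, mul_left_comm]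

lemma exists_hammingDist_mul_card_le [Finite G] (f : G →+ (I → H))
    (hf : ∀ i, Surjective fun g => f g i) (w : I → H) :
    ∃ g, hammingDist w (f g) * Fintype.card H ≤ Fintype.card I * (Fintype.card H - 1) := by
  have := Fintype.ofFinite G
  have average : ∑ g, hammingDist w (f g) * Fintype.card H ≤
      ∑ _g : G, Fintype.card I * (Fintype.card H - 1) := by
    rw [← sum_mul, sum_hammingDist_mul_card f hf, sum_const, card_univ, smul_eq_mul]
  obtain ⟨g, -, hg⟩ := exists_le_of_sum_le univ_nonempty average
  exact ⟨g, hg⟩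

end Averaging

section CoveringRadius

variable {q : ℕ} {I : Type*}

lemma hdist_eq_hammingDist [Fintype I] (x y : I → ZMod q) : hdist x y = hammingDist x y := by
  rw [hdist, hammingDist, Set.ncard_eq_toFinset_card', Set.toFinset_ofPred]

lemma covRad_le_of_forall_exists {C : Set (I → ZMod q)} {r : ℕ}
    (h : ∀ w, ∃ c ∈ C, hdist w c ≤ r) : covRad C ≤ r := by
  refine csSup_le (Set.nonempty_of_mem ⟨0, rfl⟩) ?_
  rintro _ ⟨w, rfl⟩
  obtain ⟨c, hc, hwc⟩ := h w
  exact le_trans (Nat.sInf_le ⟨c, hc, rfl⟩) hwc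

lemma covRad_range_mul_le [NeZero q] [Finite I] {G : Type*} [AddGroup G] [Finite G]
    (f : G →+ (I → ZMod q)) (hf : ∀ i, Surjective fun g => f g i) :
    covRad (Set.range f) * q ≤ Nat.card I * (q - 1) := by
  have := Fintype.ofFinite I
  rw [← Nat.le_div_iff_mul_le (NeZero.pos q)]
  refine covRad_le_of_forall_exists fun w => ?_
  obtain ⟨g, hg⟩ := exists_hammingDist_mul_card_le f hf w
  refine ⟨f g, Set.mem_range_self g, ?_⟩
  rwa [ZMod.card, ← Nat.card_eq_fintype_card, ← hdist_eq_hammingDist,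
    ← Nat.le_div_iff_mul_le (NeZero.pos q)] at hg

end CoveringRadius

section LastNonzero

variable {ι R : Type*} [LinearOrder ι] [Zero R] {x : ι → R} {i m : ι} {a b : R}

/-- `m` is the position of the last nonzero coordinate of the vector `x`. The columns in `Vset q k`
are the vectors that take the value `1` there. -/
def IsLastNonzero (x : ι → R) (m : ι) : Prop :=
  x m ≠ 0 ∧ ∀ i, m < i → x i = 0

lemma IsLastNonzero.unique {n : ι} (hm : IsLastNonzero x m) (hn : IsLastNonzero x n) : m = n :=
  le_antisymm (not_lt.1 fun h => hm.1 (hn.2 m h)) (not_lt.1 fun h => hn.1 (hm.2 n h))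

lemma exists_isLastNonzero [Finite ι] (hi : x i ≠ 0) : ∃ m, IsLastNonzero x m := by
  obtain ⟨m, hm, hmax⟩ := (Set.toFinite {j | x j ≠ 0}).exists_maximal ⟨i, hi⟩
  exact ⟨m, hm, fun j hmj => not_not.1 fun hj => hmj.not_ge (hmax hj hmj.le)⟩

open Classical in
/-- The vector `x` with its last nonzero coordinate, if there is one, replaced by `a`. Over a ring
with zero divisors this plays the role of rescaling `x`. -/
noncomputable def setLastNonzero (x : ι → R) (a : R) (i : ι) : R :=
  if IsLastNonzero x i then a else x i

lemma IsLastNonzero.setLastNonzero_apply (hm : IsLastNonzero x m) : setLastNonzero x a m = a :=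
  if_pos hm

lemma setLastNonzero_apply_ne_zero_iff (ha : a ≠ 0) : setLastNonzero x a i ≠ 0 ↔ x i ≠ 0 := by
  by_cases hi : IsLastNonzero x i
  · simp only [hi.setLastNonzero_apply, ha, hi.1, ne_eq, not_false_eq_true]
  · rw [setLastNonzero, if_neg hi]

lemma isLastNonzero_setLastNonzero_iff (ha : a ≠ 0) :
    IsLastNonzero (setLastNonzero x a) m ↔ IsLastNonzero x m :=
  and_congr (setLastNonzero_apply_ne_zero_iff ha) <| forall₂_congr fun _ _ =>
    not_iff_not.1 (setLastNonzero_apply_ne_zero_iff ha)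

lemma setLastNonzero_setLastNonzero (ha : a ≠ 0) :
    setLastNonzero (setLastNonzero x a) b = setLastNonzero x b := by
  funext i
  by_cases hi : IsLastNonzero x i
  · rw [((isLastNonzero_setLastNonzero_iff ha).2 hi).setLastNonzero_apply, hi.setLastNonzero_apply]
  · have hi' : ¬IsLastNonzero (setLastNonzero x a) i := by rwa [isLastNonzero_setLastNonzero_iff ha]
    rw [setLastNonzero, if_neg hi', setLastNonzero, setLastNonzero, if_neg hi, if_neg hi]

lemma IsLastNonzero.setLastNonzero_self (hm : IsLastNonzero x m) :
    setLastNonzero x (x m) = x := by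
  funext i
  by_cases hi : IsLastNonzero x i
  · rw [hi.setLastNonzero_apply, hm.unique hi]
  · exact if_neg hi

variable [Finite ι] (s : Set ι) {c : R}

lemma bijOn_setLastNonzero (hc : c ≠ 0) :
    Set.BijOn (fun p : (ι → R) × R => setLastNonzero p.1 p.2)
      ({v | (∃ m, IsLastNonzero v m ∧ v m = c) ∧ ∃ i ∈ s, v i ≠ 0} ×ˢ {0}ᶜ)
      {x | ∃ i ∈ s, x i ≠ 0} := by
  refine ⟨?mapsTo, ?injOn, ?surjOn⟩
  case mapsTo =>
    rintro ⟨v, a⟩ ⟨⟨-, i, his, hi⟩, ha⟩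
    exact ⟨i, his, (setLastNonzero_apply_ne_zero_iff ha).2 hi⟩
  case injOn =>
    rintro ⟨v, a⟩ ⟨⟨⟨m, hm, hvm⟩, -⟩, ha⟩ ⟨v', a'⟩ ⟨⟨⟨m', hm', hvm'⟩, -⟩, ha'⟩ heq
    dsimp only at *
    have hv : v = v' := by
      rw [← hm.setLastNonzero_self, ← hm'.setLastNonzero_self, hvm, hvm',
        ← setLastNonzero_setLastNonzero ha, heq, setLastNonzero_setLastNonzero ha']
    subst hv
    rw [← hm.setLastNonzero_apply (a := a), heq, hm.setLastNonzero_apply]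
  case surjOn =>
    rintro x ⟨i, his, hi⟩
    obtain ⟨m, hm⟩ := exists_isLastNonzero hi
    refine ⟨(setLastNonzero x c, x m), ⟨⟨⟨m, ?_, hm.setLastNonzero_apply⟩, i, his, ?_⟩, hm.1⟩, ?_⟩
    · exact (isLastNonzero_setLastNonzero_iff hc).2 hm
    · exact (setLastNonzero_apply_ne_zero_iff hc).2 hi
    · exact (setLastNonzero_setLastNonzero hc).trans hm.setLastNonzero_self

lemma ncard_lastNonzero_eq_mul_card_sub_one [Finite R] (hc : c ≠ 0) :
    {v : ι → R | (∃ m, IsLastNonzero v m ∧ v m = c) ∧ ∃ i ∈ s, v i ≠ 0}.ncard *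
      (Nat.card R - 1) = {x : ι → R | ∃ i ∈ s, x i ≠ 0}.ncard := by
  rw [← (bijOn_setLastNonzero s hc).ncard_eq, Set.ncard_prod, Set.ncard_compl, Set.ncard_singleton]

end LastNonzero

lemma ncard_exists_ne_zero_add_pow {ι R : Type*} [Finite ι] [Finite R] [Zero R] (s : Set ι) :
    {x : ι → R | ∃ i ∈ s, x i ≠ 0}.ncard + Nat.card R ^ sᶜ.ncard = Nat.card R ^ Nat.card ι := by
  classical
  have := Fintype.ofFinite ι
  have := Fintype.ofFinite R
  have vanishing : {x : ι → R | ∃ i ∈ s, x i ≠ 0}ᶜ.ncard = Nat.card R ^ sᶜ.ncard := by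
    have pi_eq : {x : ι → R | ∃ i ∈ s, x i ≠ 0}ᶜ =
        Fintype.piFinset fun i => if i ∈ s then ({0} : Finset R) else univ := by
      ext x
      simp [apply_ite]
    rw [pi_eq, Set.ncard_coe_finset, Fintype.card_piFinset]
    simp [apply_ite, prod_ite, Set.ncard_eq_toFinset_card', Set.compl_def]
  rw [← vanishing, Set.ncard_add_ncard_compl, Nat.card_fun]

section MacDonald

variable {q k u : ℕ}

lemma mem_vset_iff {v : Fin k → ZMod q} :
    v ∈ Vset q k ↔ ∃ m, IsLastNonzero v m ∧ v m = 1 := by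
  constructor
  · rintro ⟨-, m, hm, hlast, hone⟩
    exact ⟨m, ⟨hm, hlast⟩, hone⟩
  · rintro ⟨m, ⟨hm, hlast⟩, hone⟩
    exact ⟨ne_iff.2 ⟨m, hm⟩, m, hm, hlast, hone⟩

lemma ncard_wset_mul_add_pow (hq : 2 ≤ q) (hu : u ≤ k) :
    (Wset q k u).ncard * (q - 1) + q ^ u = q ^ k := by
  have : NeZero q := ⟨by omega⟩
  have : Fact (1 < q) := ⟨hq⟩
  set low : Set (Fin k) := {i | (i : ℕ) < k - u}
  have Wset_eq : Wset q k u =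
      {v | (∃ m, IsLastNonzero v m ∧ v m = 1) ∧ ∃ i ∈ low, v i ≠ 0} :=
    Set.ext fun _ => and_congr mem_vset_iff Iff.rfl
  have low_ncard : low.ncard = k - u := by
    rw [Set.ncard_eq_toFinset_card', Set.toFinset_ofPred, Fin.card_filter_val_lt]
    omega
  have high_ncard : lowᶜ.ncard = u := by
    rw [Set.ncard_compl, low_ncard, Nat.card_fin]
    omega
  have hcount := ncard_lastNonzero_eq_mul_card_sub_one (R := ZMod q) low one_ne_zero
  have htotal := ncard_exists_ne_zero_add_pow (R := ZMod q) low
  rwa [← hcount, ← Wset_eq, high_ncard, Nat.card_zmod, Nat.card_fin] at htotal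

lemma covRad_macDonaldCode_mul_le [NeZero q] :
    covRad (MacDonaldCode q k u) * q ≤ (Wset q k u).ncard * (q - 1) := by
  let encode : (Fin k → ZMod q) →+ (Wset q k u → ZMod q) :=
    (Matrix.of fun v : Wset q k u => v.1).mulVecLin.toAddMonoidHom
  have encode_apply (x : Fin k → ZMod q) (v : Wset q k u) : encode x v = ∑ i, x i * v.1 i :=
    dotProduct_comm v.1 x
  have code_eq : MacDonaldCode q k u = Set.range encode := by
    ext c
    simp only [MacDonaldCode, Set.mem_ofPred_eq, Set.mem_range, funext_iff, encode_apply,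
      eq_comm]
  have coord_surjective (v : Wset q k u) : Surjective fun x => encode x v := by
    intro b
    obtain ⟨m, -, hm⟩ := mem_vset_iff.1 v.2.1
    exact ⟨Pi.single m b, by simp [encode_apply, Pi.single_apply, hm]⟩
  rw [code_eq]
  exact covRad_range_mul_le encode coord_surjective

lemma covRad_macDonaldCode_mul_add_pow_le (hq : 2 ≤ q) (hu : u ≤ k) :
    covRad (MacDonaldCode q k u) * q + q ^ u ≤ q ^ k := by
  have : NeZero q := ⟨by omega⟩
  rw [← ncard_wset_mul_add_pow hq hu]
  exact Nat.add_le_add_right covRad_macDonaldCode_mul_le _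

lemma cast_covRad_macDonaldCode_succ_le (hq : 2 ≤ q) (hu : u ≤ k + 1) :
    (covRad (MacDonaldCode q (k + 1) u) : ℝ) ≤ (q : ℝ) ^ k - (q : ℝ) ^ u / q := by
  have hQ : (0 : ℝ) < q := by positivity
  have h : (covRad (MacDonaldCode q (k + 1) u) : ℝ) * q + (q : ℝ) ^ u ≤ (q : ℝ) ^ (k + 1) := by
    exact_mod_cast covRad_macDonaldCode_mul_add_pow_le hq hu
  rw [← mul_le_mul_iff_left₀ hQ, sub_mul, div_mul_cancel₀ _ hQ.ne', ← pow_succ]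
  exact le_sub_iff_add_le.2 h

end MacDonald

section Estimates

variable {𝕜 : Type*} [Field 𝕜] [LinearOrder 𝕜] [IsStrictOrderedRing 𝕜] {Q F P : 𝕜}

lemma mul_sub_one_le_div {T m : 𝕜} (hQ : 1 < Q) (hF₀ : 0 ≤ F) (hF : F ≤ Q - 1) (hP : 0 ≤ P)
    (hT : 1 ≤ T) (hm : 0 ≤ m) :
    P * (T - 1) ≤
      (m * (Q - 1) * F + (Q ^ 2 - Q - F) * (P * Q) * (T - 1)) / (Q * (Q - 1) ^ 2) := by
  have : 0 < Q - 1 := sub_pos.2 hQ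
  have : 0 ≤ T - 1 := sub_nonneg.2 hT
  have : 0 ≤ Q - 1 - F := sub_nonneg.2 hF
  rw [le_div_iff₀ (by positivity), ← sub_nonneg]
  calc 0 ≤ m * (Q - 1) * F + (Q - 1 - F) * (P * Q * (T - 1)) := by positivity
    _ = _ := by ring

lemma sub_div_le_of_mul_sub_one_eq {N : 𝕜} (hQ : 0 < Q) (hF : F ≤ Q - 1) (hN : 0 ≤ N)
    (hNP : N * (Q - 1) = P - 1) :
    P - P / Q ≤ (Q - 1) * F * N / Q + (Q - 1 - F) * N + 1 := by
  have hFN : F * N ≤ P := by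
    calc F * N ≤ (Q - 1) * N := by gcongr
      _ = P - 1 := by rw [mul_comm, hNP]
      _ ≤ P := sub_le_self P zero_le_one
  calc P - P / Q ≤ P - F * N / Q := by gcongr
    _ = N * (Q - 1) + 1 - F * N / Q := by rw [hNP, sub_add_cancel]
    _ = (Q - 1) * F * N / Q + (Q - 1 - F) * N + 1 := by
      field_simp
      ring

end Estimates

lemma cast_pow_sub_one_div_mul {R : Type*} [Ring R] {q : ℕ} (hq : 1 ≤ q) (u : ℕ) :
    (((q ^ u - 1) / (q - 1) : ℕ) : R) * ((q : R) - 1) = (q : R) ^ u - 1 := by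
  have h : (q ^ u - 1) / (q - 1) * (q - 1) = q ^ u - 1 :=
    Nat.div_mul_cancel (Nat.sub_one_dvd_pow_sub_one q u)
  have := congrArg (Nat.cast (R := R)) h
  push_cast [hq, Nat.one_le_pow u q hq] at this
  exact this

theorem covRad_macdonald_le'_general (q k u : ℕ) (hq : 2 ≤ q) (huk : u ≤ k) :
    (covRad (MacDonaldCode q (k + 1) u) : ℝ) ≤
      (((k : ℝ) - (u : ℝ)) * ((q : ℝ) - 1) * (Nat.totient q : ℝ) +
          ((q : ℝ) ^ 2 - (q : ℝ) - (Nat.totient q : ℝ)) * (q : ℝ) ^ (u + 1) *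
            ((q : ℝ) ^ (k - u) - 1)) /
        ((q : ℝ) * ((q : ℝ) - 1) ^ 2) +
      ((q : ℝ) - 1) * (Nat.totient q : ℝ) * (((q ^ u - 1) / (q - 1) : ℕ) : ℝ) / (q : ℝ) +
      ((q : ℝ) - 1 - (Nat.totient q : ℝ)) * (((q ^ u - 1) / (q - 1) : ℕ) : ℝ) + 1 := by
  have hQ : (1 : ℝ) < q := by exact_mod_cast hq
  have hφ : (Nat.totient q : ℝ) ≤ q - 1 := by
    have := Nat.totient_lt q hq
    rw [le_sub_iff_add_le]
    exact_mod_cast this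
  have radius_le := cast_covRad_macDonaldCode_succ_le hq (huk.trans k.le_succ)
  have first_term := mul_sub_one_le_div hQ (Nat.cast_nonneg (Nat.totient q)) hφ
    (by positivity : 0 ≤ (q : ℝ) ^ u) (one_le_pow₀ hQ.le : 1 ≤ (q : ℝ) ^ (k - u))
    (sub_nonneg.2 (Nat.cast_le.2 huk))
  have remaining_terms := sub_div_le_of_mul_sub_one_eq (zero_lt_one.trans hQ) hφ
    (Nat.cast_nonneg _) (cast_pow_sub_one_div_mul (one_le_two.trans hq) u)
  rw [mul_sub_one, pow_mul_pow_sub _ huk, ← pow_succ] at first_term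
  linarith

/-- For even `q` and `k ≥ u ≥ 2` with `k ≥ 2`, the covering radius of the
`ZMod q`-MacDonald code satisfies
`R(M_{k+1,u}) ≤ ((k-u)(q-1)φ(q) + (q²-q-φ(q))q^{u+1}(q^{k-u}-1))/(q(q-1)²)
  + (q-1)φ(q)n_u/q + (q-1-φ(q))n_u + 1`, where `n_u = (q^u-1)/(q-1)`. -/
theorem covRad_macdonald_le' (q k u : ℕ) (hq : 2 ≤ q) (hqe : Even q)
    (hk : 2 ≤ k) (hu : 2 ≤ u) (huk : u ≤ k) :
    (covRad (MacDonaldCode q (k + 1) u) : ℝ) ≤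
      (((k : ℝ) - (u : ℝ)) * ((q : ℝ) - 1) * (Nat.totient q : ℝ) +
          ((q : ℝ) ^ 2 - (q : ℝ) - (Nat.totient q : ℝ)) * (q : ℝ) ^ (u + 1) *
            ((q : ℝ) ^ (k - u) - 1)) /
        ((q : ℝ) * ((q : ℝ) - 1) ^ 2) +
      ((q : ℝ) - 1) * (Nat.totient q : ℝ) * (((q ^ u - 1) / (q - 1) : ℕ) : ℝ) / (q : ℝ) +
      ((q : ℝ) - 1 - (Nat.totient q : ℝ)) * (((q ^ u - 1) / (q - 1) : ℕ) : ℝ) + 1 := by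
  exact covRad_macdonald_le'_general q k u hq huk
end
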